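/- For every integer n ≥ 1, the theory PA⁻ + IΣn proves fairFRT^1_2(Σ_{n+1}): in every model M of PA⁻ + IΣn, for every x there exists y such that for every Σ_{n+1}-definable 2-coloring F of [0,y) there is a Σ_{n+1}-definable injection from [0,x) into [0,y) whose range is homogeneous for F. -/

import Mathlib

/- Shared development: first-order arithmetic in the language {0,1,+,·,<},
   the arithmetic hierarchy, fragments of arithmetic, and coded finite
   combinatorics inside models. -/

open FirstOrder Language

namespace ArithFC

/-- Function symbols of the language of arithmetic: 0, 1, +, ·. -/
inductive Func : ℕ → Type
  | zero : Func 0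
  | one : Func 0
  | add : Func 2
  | mul : Func 2

/-- Relation symbols of the language of arithmetic: <. -/
inductive Rel : ℕ → Type
  | lt : Rel 2

/-- The first-order language {0, 1, +, ·, <}. -/
def lang : Language :=
  { Functions := Func, Relations := Rel }

section Instances

variable (M : Type) [lang.Structure M]

instance : Zero M := ⟨Structure.funMap (L := lang) Func.zero ![]⟩
instance : One M := ⟨Structure.funMap (L := lang) Func.one ![]⟩
instance : Add M := ⟨fun x y => Structure.funMap (L := lang) Func.add ![x, y]⟩
instance : Mul M := ⟨fun x y => Structure.funMap (L := lang) Func.mul ![x, y]⟩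
instance : LT M := ⟨fun x y => Structure.RelMap (L := lang) Rel.lt ![x, y]⟩
instance : LE M := ⟨fun x y => x < y ∨ x = y⟩

end Instances

/-- The numeral `n` in a model. -/
def numM (M : Type) [lang.Structure M] : ℕ → M
  | 0 => 0
  | n + 1 => numM M n + 1

/-- `b` is nonstandard (greater than every numeral). -/
def Nonstd {M : Type} [lang.Structure M] (b : M) : Prop := ∀ n : ℕ, numM M n < b

/-- The atomic formula `t < u`. -/
def ltFm {α : Type} {n : ℕ} (t u : lang.Term (α ⊕ Fin n)) : lang.BoundedFormula α n :=
  BoundedFormula.rel (Rel.lt : lang.Relations 2) ![t, u]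

/-- Δ₀ formulas: built from atomic formulas by boolean connectives and
bounded universal quantification (this generates, up to logical equivalence,
the usual class of bounded formulas). -/
inductive IsDelta0 {α : Type} : ∀ n : ℕ, lang.BoundedFormula α n → Prop
  | falsum (n : ℕ) : IsDelta0 n BoundedFormula.falsum
  | equal (n : ℕ) (t u : lang.Term (α ⊕ Fin n)) : IsDelta0 n (BoundedFormula.equal t u)
  | rel (n l : ℕ) (R : lang.Relations l) (ts : Fin l → lang.Term (α ⊕ Fin n)) :
      IsDelta0 n (BoundedFormula.rel R ts)
  | imp (n : ℕ) {φ ψ : lang.BoundedFormula α n} :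
      IsDelta0 n φ → IsDelta0 n ψ → IsDelta0 n (φ.imp ψ)
  | bdAll (n : ℕ) (t : lang.Term (α ⊕ Fin n)) {φ : lang.BoundedFormula α (n + 1)} :
      IsDelta0 (n + 1) φ →
      IsDelta0 n
        (BoundedFormula.all ((ltFm (Term.var (Sum.inr (Fin.last n))) (t.liftAt 1 n)).imp φ))

mutual
  /-- Σ_m formulas. -/
  inductive SigmaFm {α : Type} : ℕ → ∀ n : ℕ, lang.BoundedFormula α n → Prop
    | delta0 (m n : ℕ) {φ : lang.BoundedFormula α n} : IsDelta0 n φ → SigmaFm m n φ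
    | ofPi (m n : ℕ) {φ : lang.BoundedFormula α n} : PiFm m n φ → SigmaFm (m + 1) n φ
    | ex (m n : ℕ) {φ : lang.BoundedFormula α (n + 1)} :
        SigmaFm (m + 1) (n + 1) φ → SigmaFm (m + 1) n φ.ex
  /-- Π_m formulas. -/
  inductive PiFm {α : Type} : ℕ → ∀ n : ℕ, lang.BoundedFormula α n → Prop
    | delta0 (m n : ℕ) {φ : lang.BoundedFormula α n} : IsDelta0 n φ → PiFm m n φ
    | ofSigma (m n : ℕ) {φ : lang.BoundedFormula α n} : SigmaFm m n φ → PiFm (m + 1) n φ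
    | all (m n : ℕ) {φ : lang.BoundedFormula α (n + 1)} :
        PiFm (m + 1) (n + 1) φ → PiFm (m + 1) n φ.all
end

/-- A `k`-ary relation on `M` is Σ_m-definable (with parameters from `M`). -/
def IsSigmaDef (m : ℕ) (M : Type) [lang.Structure M] {k : ℕ} (R : (Fin k → M) → Prop) : Prop :=
  ∃ (p : ℕ) (φ : lang.BoundedFormula (Fin k ⊕ Fin p) 0) (w : Fin p → M),
    SigmaFm m 0 φ ∧ ∀ v : Fin k → M, R v ↔ φ.Realize (Sum.elim v w) finZeroElim

/-- A subset of `M` is Σ_m-definable with parameters. -/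
def SigmaDef1 (m : ℕ) (M : Type) [lang.Structure M] (A : Set M) : Prop :=
  IsSigmaDef m M (k := 1) fun v => v 0 ∈ A

/-- A binary relation on `M` is Σ_m-definable with parameters. -/
def SigmaDef2 (m : ℕ) (M : Type) [lang.Structure M] (R : M → M → Prop) : Prop :=
  IsSigmaDef m M (k := 2) fun v => R (v 0) (v 1)

/-- A ternary relation on `M` is Σ_m-definable with parameters. -/
def SigmaDef3 (m : ℕ) (M : Type) [lang.Structure M] (R : M → M → M → Prop) : Prop :=
  IsSigmaDef m M (k := 3) fun v => R (v 0) (v 1) (v 2)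

/-- `M` is a model of PA⁻ (the nonnegative part of a discretely ordered
commutative semiring). -/
structure PAm (M : Type) [lang.Structure M] : Prop where
  add_assoc : ∀ x y z : M, x + y + z = x + (y + z)
  add_comm : ∀ x y : M, x + y = y + x
  mul_assoc : ∀ x y z : M, x * y * z = x * (y * z)
  mul_comm : ∀ x y : M, x * y = y * x
  ldistrib : ∀ x y z : M, x * (y + z) = x * y + x * z
  add_zero : ∀ x : M, x + 0 = x
  mul_zero : ∀ x : M, x * 0 = 0
  mul_one : ∀ x : M, x * 1 = x
  lt_trans : ∀ x y z : M, x < y → y < z → x < z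
  lt_irrefl : ∀ x : M, ¬x < x
  lt_total : ∀ x y : M, x < y ∨ x = y ∨ y < x
  add_lt_add : ∀ x y z : M, x < y → x + z < y + z
  mul_lt_mul : ∀ x y z : M, x < y → 0 < z → x * z < y * z
  sub_exists : ∀ x y : M, x < y → ∃ z, x + z = y
  zero_lt_one : (0 : M) < 1
  discrete : ∀ x : M, 0 < x → (1 : M) ≤ x
  zero_le : ∀ x : M, (0 : M) ≤ x

/-- `M` satisfies the Σ_m-induction scheme (with parameters). -/
def ISig (m : ℕ) (M : Type) [lang.Structure M] : Prop :=
  ∀ A : Set M, SigmaDef1 m M A → (0 : M) ∈ A → (∀ x, x ∈ A → x + 1 ∈ A) → ∀ x, x ∈ A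

/-- `M` satisfies the Σ_m-collection (bounding) scheme (with parameters). -/
def BSig (m : ℕ) (M : Type) [lang.Structure M] : Prop :=
  ∀ R : M → M → Prop, SigmaDef2 m M R → ∀ a : M,
    (∀ x, x < a → ∃ y, R x y) → ∃ b, ∀ x, x < a → ∃ y, y < b ∧ R x y

section Coding

variable {M : Type} [lang.Structure M]

/-- `z` is the Cantor pair `⟨x, y⟩`: `2z = (x+y)(x+y+1) + 2y`. -/
def IsPairC (z x y : M) : Prop := z + z = (x + y) * (x + y + 1) + (y + y)

/-- Gödel's β-function: `x = a mod ((i+1)·b + 1)`. -/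
def BetaC (a b i x : M) : Prop :=
  x < (i + 1) * b + 1 ∧ ∃ q, a = q * ((i + 1) * b + 1) + x

/-- The sequence coded by `s` (via a Cantor pair of β-function data) has value `x`
at place `i`. -/
def SeqAt (s i x : M) : Prop := ∃ a b, IsPairC s a b ∧ BetaC a b i x

/-- `c` codes the M-finite set `X` of cardinality `card`: `c = ⟨card, s⟩` where `s`
codes the strictly increasing enumeration of `X` of length `card`. -/
def CodesFinset (c : M) (X : Set M) (card : M) : Prop :=
  ∃ s, IsPairC c card s ∧
    (∀ i, i < card → ∃ x, x ∈ X ∧ SeqAt s i x) ∧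
    (∀ i j x y, i < j → j < card → SeqAt s i x → SeqAt s j y → x < y) ∧
    (∀ x, x ∈ X ↔ ∃ i, i < card ∧ SeqAt s i x)

/-- `X` is an M-finite (coded) set. -/
def MFinite (X : Set M) : Prop := ∃ c card : M, CodesFinset c X card

/-- `d` codes an `e`-element subset `D` of `[0, y)`, i.e. an element of `[y]^e`. -/
def CodesTupleIn (d e y : M) (D : Set M) : Prop :=
  CodesFinset d D e ∧ ∀ z ∈ D, z < y

/-- `f` codes a (finite) function defined on all of `[0, a)`. -/
def CodesFunOn (f a : M) : Prop :=
  ∀ x, x < a → (∃ y, SeqAt f x y) ∧ ∀ y y', SeqAt f x y → SeqAt f x y' → y = y'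

/-- `X` is an M-coded subset of `[0, a)`. -/
def MCodedSubset (a : M) (X : Set M) : Prop :=
  MFinite X ∧ ∀ x ∈ X, x < a

end Coding

/-- An `M`-ultrafilter on `a`: an ultrafilter of the Boolean algebra of
M-finite subsets of `[0, a)`. -/
structure MUltra (M : Type) [lang.Structure M] (a : M) where
  sets : Set (Set M)
  mem_coded : ∀ X ∈ sets, MCodedSubset a X
  univ_mem : {x : M | x < a} ∈ sets
  superset_mem : ∀ X Y : Set M, X ∈ sets → MCodedSubset a Y → X ⊆ Y → Y ∈ sets
  inter_mem : ∀ X Y : Set M, X ∈ sets → Y ∈ sets → X ∩ Y ∈ sets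
  empty_not_mem : (∅ : Set M) ∉ sets
  ultra : ∀ X : Set M, MCodedSubset a X → X ∈ sets ∨ {x : M | x < a ∧ x ∉ X} ∈ sets

section Principles

variable (M : Type) [lang.Structure M]

/-- `F` is (the graph of) a Σ_m-definable injection from `[0, y)` into `[0, x)`. -/
def SigmaInjRel (m : ℕ) (F : M → M → Prop) (y x : M) : Prop :=
  SigmaDef2 m M F ∧
    (∀ u, u < y → ∃ v, v < x ∧ F u v) ∧
    (∀ u v v', u < y → F u v → F u v' → v = v') ∧
    (∀ u u' v, u < y → u' < y → F u v → F u' v → u = u')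

/-- There exists a Σ_m-definable injection from `[0, y)` into `[0, x)`. -/
def ExSigmaInj (m : ℕ) (y x : M) : Prop := ∃ F : M → M → Prop, SigmaInjRel M m F y x

/-- There exists a Σ_m-definable injection from all of `M` into `[0, a)`. -/
def SigmaInjWhole (m : ℕ) (a : M) : Prop :=
  ∃ F : M → M → Prop, SigmaDef2 m M F ∧
    (∀ u, ∃ v, v < a ∧ F u v) ∧
    (∀ u v v', F u v → F u v' → v = v') ∧
    (∀ u u' v, F u v → F u' v → u = u')

/-- CARD(Σ_m): no Σ_m-definable multivalued map sends `M` injectively below `a`. -/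
def CARD (m : ℕ) : Prop :=
  ∀ F : M → M → Prop, SigmaDef2 m M F → ∀ a : M,
    (∀ x, ∃ y, y < a ∧ F x y) →
      ∃ x0 x1 y, x0 ≠ x1 ∧ y < a ∧ F x0 y ∧ F x1 y

/-- GPHP(Σ_m): for every `x` there is `y` with no Σ_m-definable injection of
`[0,y)` into `[0,x)`. -/
def GPHP (m : ℕ) : Prop := ∀ x : M, ∃ y : M, ¬ExSigmaInj M m y x

/-- WPHP(Σ_m): for `x > 0` there is no Σ_m-definable injection of `[0,2x)` into `[0,x)`. -/
def WPHP (m : ℕ) : Prop := ∀ x : M, 0 < x → ¬ExSigmaInj M m (x + x) x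

/-- `C` is a Σ_m-definable `k`-coloring of `[y]^e` (acting on codes of
`e`-element subsets of `[0,y)`, independently of the chosen code). -/
def IsColoring (m : ℕ) (e y k : M) (C : M → M → Prop) : Prop :=
  SigmaDef2 m M C ∧
    (∀ d D, CodesTupleIn d e y D → ∃ i, i < k ∧ C d i) ∧
    (∀ d d' D i i', CodesTupleIn d e y D → CodesTupleIn d' e y D → C d i → C d' i' → i = i')

/-- FRT^e_k(Σ_m): every Σ_m-definable `k`-coloring of some `[y]^e` has an
M-finite homogeneous set of cardinality `x`, for every `x`. -/
def FRT (m : ℕ) (e k : M) : Prop :=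
  ∀ x : M, ∃ y : M, ∀ C : M → M → Prop, IsColoring M m e y k C →
    ∃ (c : M) (H : Set M), CodesFinset c H x ∧ (∀ z ∈ H, z < y) ∧
      ∃ i, ∀ d D, CodesFinset d D e → D ⊆ H → C d i

/-- fairFRT^e_k(Σ_m): the homogeneous set is required to be given as the range of a
Σ_m-definable injection from `[0,x)` into `[0,y)`. -/
def FairFRT (m : ℕ) (e k : M) : Prop :=
  ∀ x : M, ∃ y : M, ∀ C : M → M → Prop, IsColoring M m e y k C →
    ∃ H : M → M → Prop, SigmaInjRel M m H x y ∧
      ∃ i, ∀ d D, CodesFinset d D e → (∀ z ∈ D, ∃ u, u < x ∧ H u z) → C d i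

/-- `C` is a Σ_m-definable `k`-coloring of `[0, y)`. -/
def IsColoring1 (m : ℕ) (y k : M) (C : M → M → Prop) : Prop :=
  SigmaDef2 m M C ∧
    (∀ z, z < y → ∃ i, i < k ∧ C z i) ∧
    (∀ z i i', z < y → C z i → C z i' → i = i')

/-- FRT¹_k(Σ_m): every Σ_m-definable `k`-coloring of some `[0,y)` has an M-finite
homogeneous set of cardinality `x`, for every `x`. -/
def FRT1 (m : ℕ) (k : M) : Prop :=
  ∀ x : M, ∃ y : M, ∀ C : M → M → Prop, IsColoring1 M m y k C →
    ∃ (c : M) (H : Set M), CodesFinset c H x ∧ (∀ z ∈ H, z < y) ∧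
      ∃ i, ∀ z ∈ H, C z i

/-- fairFRT¹_k(Σ_m). -/
def FairFRT1 (m : ℕ) (k : M) : Prop :=
  ∀ x : M, ∃ y : M, ∀ C : M → M → Prop, IsColoring1 M m y k C →
    ∃ H : M → M → Prop, SigmaInjRel M m H x y ∧
      ∃ i, ∀ u v, u < x → H u v → C v i

end Principles

section Approx

variable {M : Type} [lang.Structure M]

/-- `f` is (the graph of) a partial function. -/
def IsPartialFun (f : M → M → Prop) : Prop := ∀ x y y', f x y → f x y' → y = y'

/-- `s` codes an approximation to the partial function `f` of length `b`. -/
def IsApprox (f : M → M → Prop) (s b : M) : Prop :=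
  (∀ i, i < b → ∃ v, SeqAt s i v) ∧
    (∀ i u v x y, i + 1 < b → SeqAt s i u → SeqAt s (i + 1) v → x ≤ u → f x y → y ≤ v)

/-- `s` codes a `g`-stretched approximation to the partial function `f` of length `b`. -/
def IsStretchedApprox (f g : M → M → Prop) (s b : M) : Prop :=
  (∀ i, i < b → ∃ v, SeqAt s i v) ∧
    (∀ i u w v x y, i + 1 < b → SeqAt s i u → g u w → SeqAt s (i + 1) v →
      x ≤ w → f x y → y ≤ v)

/-- The eventual (limit) value of `fun s => h s ·` is `x`. -/
def EvLim (h : M → M → Prop) (x : M) : Prop := ∃ s : M, ∀ t, s < t → h t x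

end Approx

/-- PΣ_m: every partial Σ_m-definable function admits approximations of every length. -/
def PSig (m : ℕ) (M : Type) [lang.Structure M] : Prop :=
  ∀ f : M → M → Prop, SigmaDef2 m M f → IsPartialFun f → ∀ b : M, ∃ s, IsApprox f s b

section Extensions

variable (M N : Type) [lang.Structure M] [lang.Structure N]

/-- `g : M → N` is Σ_m-elementary: Σ_m formulas with parameters from `M` transfer. -/
def SigmaElem (m : ℕ) (g : M → N) : Prop :=
  ∀ (p : ℕ) (φ : lang.BoundedFormula (Fin p) 0), SigmaFm m 0 φ →
    ∀ v : Fin p → M, (φ.Realize v finZeroElim ↔ φ.Realize (g ∘ v) finZeroElim)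

/-- The extension `g : M → N` is cofinal. -/
def Cofinal (g : M → N) : Prop := ∀ z : N, ∃ x : M, z ≤ g x

/-- `[0,a]^M = [0,a]^N`: every element of `N` below `g a` comes from `M`. -/
def SameBelow (g : M → N) (a : M) : Prop := ∀ z : N, z ≤ g a → ∃ x : M, g x = z

end Extensions

section Ramsey

variable {M : Type} [lang.Structure M]

/-- `f` is an M-coded `k`-coloring of `[y]^e` (assigning colors to codes of
`e`-subsets of `[0,y)`, independently of the code). -/
def CodedColoring (f e y k : M) : Prop :=
  (∀ d D, CodesTupleIn d e y D → ∃ i, i < k ∧ SeqAt f d i) ∧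
    (∀ d d' D i i', CodesTupleIn d e y D → CodesTupleIn d' e y D →
      SeqAt f d i → SeqAt f d' i' → i = i')

/-- The coded coloring `f` of `[y]^e` has an M-coded homogeneous set of cardinality `x`. -/
def CodedHomog (f e y x : M) : Prop :=
  ∃ (c : M) (H : Set M), CodesFinset c H x ∧ (∀ z ∈ H, z < y) ∧
    ∃ i, ∀ d D, CodesFinset d D e → D ⊆ H → SeqAt f d i

/-- `y = r(x, e, k)`: `y` is the least size guaranteeing coded homogeneous sets of
cardinality `x` for all coded `k`-colorings of `e`-subsets. -/
def IsRamsey (x e k y : M) : Prop :=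
  (∀ f, CodedColoring f e y k → CodedHomog f e y x) ∧
    (∀ y', y' < y → ∃ f, CodedColoring f e y' k ∧ ¬CodedHomog f e y' x)

/-- `y = r^(b)(x, e, k)`: the `b`-th iterate of the Ramsey function inside `M`. -/
def IterRamsey (x e k b y : M) : Prop :=
  ∃ s : M, SeqAt s 0 x ∧ SeqAt s b y ∧ (∀ i, i ≤ b → ∃ u, SeqAt s i u) ∧
    (∀ i u v, i < b → SeqAt s i u → SeqAt s (i + 1) v → IsRamsey u e k v)

end Ramsey

end ArithFC

namespace ArithFC

/-!
Cut `[0, x²)` into `x` consecutive blocks of length `x`. Either some block is monochromatic of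
colour `0`, and translating `[0, x)` onto it is the required injection, or every block meets
colour `1`. In the second case a point of colour `1` has to be selected in each block by a
`Σ_{n+1}` function: writing the points of colour `1` in the block as those `z` with `∃ w, S z w`,
where `S` is `Π_n`, take the least common strict bound `b` of a pair `(z, w)` satisfying `S` and
then the least `z` having a witness `w < b`. The least number principle for `Π_n` follows
from `IΣ_n`.

The complexity bookkeeping uses a semantic form of the hierarchy with one unbounded quantifier per
level; it exhausts the definable relations because `IΣ_n` yields enough collection to contract
blocks of quantifiers and to move bounded quantifiers inside.
-/

/-! ### Arithmetic in models of `PA⁻` -/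

namespace PAm

variable {M : Type} [lang.Structure M]

/-- The order of a model of `PA⁻`, built on the `<` and `≤` it already carries so that Mathlib's
order lemmas apply to them. -/
noncomputable abbrev linearOrder (hPA : PAm M) : LinearOrder M where
  le := (· ≤ ·)
  lt := (· < ·)
  le_refl _ := .inr rfl
  le_trans := by
    rintro x y z (hxy | rfl) (hyz | rfl)
    · exact .inl (hPA.lt_trans _ _ _ hxy hyz)
    · exact .inl hxy
    · exact .inl hyz
    · exact .inr rfl
  lt_iff_le_not_ge x y := by
    refine ⟨fun h => ⟨.inl h, ?_⟩, ?_⟩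
    · rintro (h' | rfl)
      · exact hPA.lt_irrefl _ (hPA.lt_trans _ _ _ h h')
      · exact hPA.lt_irrefl _ h
    · rintro ⟨h | rfl, h'⟩
      · exact h
      · exact absurd (.inr rfl) h'
  le_antisymm := by
    rintro x y (h | h) (h' | h')
    · exact absurd (hPA.lt_trans _ _ _ h h') (hPA.lt_irrefl _)
    · exact h'.symm
    · exact h
    · exact h
  le_total x y := by
    rcases hPA.lt_total x y with h | h | h
    · exact .inl (.inl h)
    · exact .inl (.inr h)
    · exact .inr (.inl h)
  toDecidableLE := Classical.decRel _

/-- The semiring structure of a model of `PA⁻`, built on the operations it already carries. -/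
abbrev commSemiring (hPA : PAm M) : CommSemiring M where
  add_assoc := hPA.add_assoc
  add_comm := hPA.add_comm
  zero_add x := by rw [hPA.add_comm, hPA.add_zero]
  add_zero := hPA.add_zero
  mul_assoc := hPA.mul_assoc
  mul_comm := hPA.mul_comm
  one_mul x := by rw [hPA.mul_comm, hPA.mul_one]
  mul_one := hPA.mul_one
  zero_mul x := by rw [hPA.mul_comm, hPA.mul_zero]
  mul_zero := hPA.mul_zero
  left_distrib := hPA.ldistrib
  right_distrib x y z := by rw [hPA.mul_comm, hPA.ldistrib, hPA.mul_comm z, hPA.mul_comm z]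
  nsmul := nsmulRec

theorem isStrictOrderedRing (hPA : PAm M) :
    @IsStrictOrderedRing M hPA.commSemiring.toSemiring hPA.linearOrder.toPartialOrder := by
  let := hPA.linearOrder
  let := hPA.commSemiring
  exact
    { add_le_add_left := by
        rintro x y (h | rfl) z
        · exact .inl (hPA.add_lt_add x y z h)
        · exact .inr rfl
      le_of_add_le_add_left := fun z x y h => le_of_not_gt fun hyx => by
        have hlt := hPA.add_lt_add y x z hyx
        rw [hPA.add_comm y, hPA.add_comm x] at hlt
        exact h.not_gt hlt
      zero_le_one := hPA.zero_le 1
      exists_pair_ne := ⟨0, 1, ne_of_lt hPA.zero_lt_one⟩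
      mul_lt_mul_of_pos_left := fun z hz x y hxy => by
        rw [hPA.mul_comm z x, hPA.mul_comm z y]
        exact hPA.mul_lt_mul x y z hxy hz
      mul_lt_mul_of_pos_right := fun z hz x y hxy => hPA.mul_lt_mul x y z hxy hz }

theorem not_lt_zero (hPA : PAm M) (x : M) : ¬x < 0 :=
  let := hPA.linearOrder
  not_lt_of_ge (hPA.zero_le x)

theorem add_one_le_iff (hPA : PAm M) {x y : M} : x + 1 ≤ y ↔ x < y := by
  let := hPA.linearOrder
  let := hPA.commSemiring
  have := hPA.isStrictOrderedRing
  refine ⟨(lt_add_one x).trans_le, fun h => ?_⟩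
  obtain ⟨d, rfl⟩ := hPA.sub_exists x y h
  have hd : 0 < d := pos_of_lt_add_right h
  exact add_le_add_right (hPA.discrete d hd) x

theorem lt_add_one_iff (hPA : PAm M) {x y : M} : x < y + 1 ↔ x ≤ y := by
  let := hPA.linearOrder
  let := hPA.commSemiring
  have := hPA.isStrictOrderedRing
  refine ⟨fun h => le_of_not_gt fun hyx => ?_, fun h => h.trans_lt (lt_add_one y)⟩
  exact h.not_ge (hPA.add_one_le_iff.2 hyx)

theorem exists_gt_gt (hPA : PAm M) (x y : M) : ∃ b, x < b ∧ y < b := by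
  let := hPA.linearOrder
  exact ⟨max x y + 1, hPA.lt_add_one_iff.2 (le_max_left x y),
    hPA.lt_add_one_iff.2 (le_max_right x y)⟩

theorem eq_zero_or_eq_one_of_lt_two (hPA : PAm M) {x : M} (h : x < 1 + 1) : x = 0 ∨ x = 1 := by
  let := hPA.linearOrder
  rcases hPA.zero_le x with hx | hx
  · exact .inr (le_antisymm (hPA.lt_add_one_iff.1 h) (hPA.discrete x hx))
  · exact .inl hx.symm

theorem isLeast_iff (hPA : PAm M) {s : Set M} {b : M} :
    IsLeast s b ↔ b ∈ s ∧ ∀ c < b, c ∉ s := by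
  let := hPA.linearOrder
  exact and_congr_right fun _ =>
    ⟨fun h c hcb hc => (h hc).not_gt hcb, fun h c hc => le_of_not_gt fun hcb => h c hcb hc⟩

theorem isLeast_unique (hPA : PAm M) {s : Set M} {b c : M} (hb : IsLeast s b)
    (hc : IsLeast s c) : b = c :=
  let := hPA.linearOrder
  hb.unique hc

theorem add_left_cancel (hPA : PAm M) {x y z : M} (h : x + y = x + z) : y = z := by
  let := hPA.linearOrder
  let := hPA.commSemiring
  have := hPA.isStrictOrderedRing
  exact _root_.add_left_cancel h

theorem mul_add_lt_mul (hPA : PAm M) {u u' v x : M} (hu : u < u') (hv : v < x) :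
    u * x + v < u' * x := by
  let := hPA.linearOrder
  let := hPA.commSemiring
  have := hPA.isStrictOrderedRing
  calc u * x + v < u * x + x := add_lt_add_right hv _
    _ = (u + 1) * x := (add_one_mul u x).symm
    _ ≤ u' * x := mul_le_mul_of_nonneg_right (hPA.add_one_le_iff.2 hu) (hPA.zero_le x)

end PAm

section Blocks

variable {M : Type} [lang.Structure M]

/-- `z` lies in the `u`-th block `[ux, ux + x)` of the partition of `M` into consecutive intervals
of length `x`. -/
def InBlock (x u z : M) : Prop := ∃ v < x, z = u * x + v

theorem InBlock.lt_mul (hPA : PAm M) {x u z w : M} (h : InBlock x u z) (hu : u < w) :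
    z < w * x := by
  obtain ⟨v, hv, rfl⟩ := h
  exact hPA.mul_add_lt_mul hu hv

theorem InBlock.unique (hPA : PAm M) {x u u' z : M} (h : InBlock x u z) (h' : InBlock x u' z) :
    u = u' := by
  let := hPA.linearOrder
  let := hPA.commSemiring
  have := hPA.isStrictOrderedRing
  have not_lt : ∀ {u u'}, InBlock x u z → InBlock x u' z → ¬u < u' := by
    rintro u u' hz ⟨v', -, rfl⟩ hlt
    exact (hz.lt_mul hPA hlt).not_ge (le_add_of_nonneg_right (hPA.zero_le v'))
  exact le_antisymm (le_of_not_gt (not_lt h' h)) (le_of_not_gt (not_lt h h'))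

end Blocks

/-! ### Substitution of terms into formulas of the arithmetic hierarchy -/

section Substitution

variable {M : Type} [lang.Structure M] {α β : Type}

theorem realize_liftAt_snoc {n : ℕ} (t : lang.Term (α ⊕ Fin n)) (v : α → M) (xs : Fin n → M)
    (a : M) :
    (t.liftAt 1 n).realize (Sum.elim v (Fin.snoc xs a : Fin (n + 1) → M)) =
      t.realize (Sum.elim v xs) := by
  rw [Term.realize_liftAt]
  congr 1
  funext x
  rcases x with x | i
  · rfl
  · simp [show Fin.castAdd 1 i = i.castSucc from rfl]

theorem realize_ltFm {n : ℕ} (t u : lang.Term (α ⊕ Fin n)) (v : α → M) (xs : Fin n → M) :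
    (ltFm t u).Realize v xs ↔ t.realize (Sum.elim v xs) < u.realize (Sum.elim v xs) :=
  BoundedFormula.realize_rel₂

/-- The substitution `σ` carried under a quantifier: the newly bound variable is left alone. -/
def liftSubst {k j : ℕ} (σ : α ⊕ Fin k → lang.Term (β ⊕ Fin j)) :
    α ⊕ Fin (k + 1) → lang.Term (β ⊕ Fin (j + 1)) :=
  Sum.elim (fun a => (σ (.inl a)).liftAt 1 j)
    (Fin.snoc (α := fun _ => lang.Term (β ⊕ Fin (j + 1)))
      (fun i => (σ (.inr i)).liftAt 1 j) (.var (.inr (Fin.last j))))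

theorem realize_liftSubst_inl {k j : ℕ} (σ : α ⊕ Fin k → lang.Term (β ⊕ Fin j)) (u : β → M)
    (xs : Fin j → M) (a : M) :
    (fun i => (liftSubst σ (.inl i)).realize (Sum.elim u (Fin.snoc xs a : Fin (j + 1) → M))) =
      fun i => (σ (.inl i)).realize (Sum.elim u xs) := by
  funext i
  simp [liftSubst, realize_liftAt_snoc]

theorem realize_liftSubst_inr {k j : ℕ} (σ : α ⊕ Fin k → lang.Term (β ⊕ Fin j)) (u : β → M)
    (xs : Fin j → M) (a : M) :
    (fun i => (liftSubst σ (.inr i)).realize (Sum.elim u (Fin.snoc xs a : Fin (j + 1) → M))) =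
      (Fin.snoc (fun i => (σ (.inr i)).realize (Sum.elim u xs)) a : Fin (k + 1) → M) := by
  funext i
  induction i using Fin.lastCases with
  | last => simp [liftSubst]
  | cast i => simp [liftSubst, realize_liftAt_snoc]

theorem realize_subst_sumElim {k j : ℕ} (σ : α ⊕ Fin k → lang.Term (β ⊕ Fin j))
    (t : lang.Term (α ⊕ Fin k)) (u : β → M) (xs : Fin j → M) :
    (t.subst σ).realize (Sum.elim u xs) =
      t.realize (Sum.elim (fun a => (σ (.inl a)).realize (Sum.elim u xs))
        (fun i => (σ (.inr i)).realize (Sum.elim u xs))) := by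
  rw [Term.realize_subst]
  congr 1
  funext x
  rcases x with a | i <;> rfl

/-- `ψ` is equivalent in `M` to the result of substituting `σ` for the variables of `φ`. -/
def IsSubstIn (M : Type) [lang.Structure M] {k j : ℕ}
    (σ : α ⊕ Fin k → lang.Term (β ⊕ Fin j)) (φ : lang.BoundedFormula α k)
    (ψ : lang.BoundedFormula β j) : Prop :=
  ∀ (u : β → M) (xs : Fin j → M), ψ.Realize u xs ↔
    φ.Realize (fun a => (σ (.inl a)).realize (Sum.elim u xs))
      (fun i => (σ (.inr i)).realize (Sum.elim u xs))

variable (M)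

theorem IsDelta0.exists_subst {k : ℕ} {φ : lang.BoundedFormula α k} (h : IsDelta0 k φ) :
    ∀ {j : ℕ} (σ : α ⊕ Fin k → lang.Term (β ⊕ Fin j)),
      ∃ ψ, IsDelta0 j ψ ∧ IsSubstIn M σ φ ψ := by
  induction h with
  | falsum n => exact fun {j} σ => ⟨_, .falsum j, fun u xs => Iff.rfl⟩
  | equal n t s =>
    intro j σ
    refine ⟨_, .equal j (t.subst σ) (s.subst σ), fun u xs => ?_⟩
    simp only [BoundedFormula.Realize, realize_subst_sumElim]
  | rel n l R ts =>
    intro j σ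
    refine ⟨_, .rel j l R fun i => (ts i).subst σ, fun u xs => ?_⟩
    simp only [BoundedFormula.Realize, realize_subst_sumElim]
  | imp n _ _ ih₁ ih₂ =>
    intro j σ
    obtain ⟨ψ₁, hψ₁, e₁⟩ := ih₁ σ
    obtain ⟨ψ₂, hψ₂, e₂⟩ := ih₂ σ
    exact ⟨_, .imp j hψ₁ hψ₂, fun u xs => imp_congr (e₁ u xs) (e₂ u xs)⟩
  | bdAll n t _ ih =>
    intro j σ
    obtain ⟨ψ, hψ, e⟩ := ih (liftSubst σ)
    refine ⟨_, .bdAll j (t.subst σ) hψ, fun u xs => ?_⟩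
    simp only [BoundedFormula.Realize, realize_ltFm, e u _, realize_liftAt_snoc,
      realize_subst_sumElim, realize_liftSubst_inl, realize_liftSubst_inr, Term.realize_var,
      Sum.elim_inr, Fin.snoc_last]

mutual

theorem SigmaFm.exists_subst : ∀ {m k : ℕ} {φ : lang.BoundedFormula α k}, SigmaFm m k φ →
    ∀ {j : ℕ} (σ : α ⊕ Fin k → lang.Term (β ⊕ Fin j)), ∃ ψ, SigmaFm m j ψ ∧ IsSubstIn M σ φ ψ
  | _, _, _, .delta0 m _ h, j, σ =>
    let ⟨ψ, hψ, e⟩ := h.exists_subst M σ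
    ⟨ψ, .delta0 m j hψ, e⟩
  | _, _, _, .ofPi m _ h, j, σ =>
    let ⟨ψ, hψ, e⟩ := h.exists_subst σ
    ⟨ψ, .ofPi m j hψ, e⟩
  | _, _, _, .ex m _ h, j, σ => by
    obtain ⟨ψ, hψ, e⟩ := h.exists_subst (liftSubst σ)
    refine ⟨_, .ex m j hψ, fun u xs => ?_⟩
    simp only [BoundedFormula.realize_ex, e u _, realize_liftSubst_inl, realize_liftSubst_inr]

theorem PiFm.exists_subst : ∀ {m k : ℕ} {φ : lang.BoundedFormula α k}, PiFm m k φ →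
    ∀ {j : ℕ} (σ : α ⊕ Fin k → lang.Term (β ⊕ Fin j)), ∃ ψ, PiFm m j ψ ∧ IsSubstIn M σ φ ψ
  | _, _, _, .delta0 m _ h, j, σ =>
    let ⟨ψ, hψ, e⟩ := h.exists_subst M σ
    ⟨ψ, .delta0 m j hψ, e⟩
  | _, _, _, .ofSigma m _ h, j, σ =>
    let ⟨ψ, hψ, e⟩ := h.exists_subst σ
    ⟨ψ, .ofSigma m j hψ, e⟩
  | _, _, _, .all m _ h, j, σ => by
    obtain ⟨ψ, hψ, e⟩ := h.exists_subst (liftSubst σ)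
    refine ⟨_, .all m j hψ, fun u xs => ?_⟩
    simp only [BoundedFormula.realize_all, e u _, realize_liftSubst_inl, realize_liftSubst_inr]

end

end Substitution

section Monotonicity

variable {α : Type}

mutual

theorem SigmaFm.succ : ∀ {m k : ℕ} {φ : lang.BoundedFormula α k}, SigmaFm m k φ →
    SigmaFm (m + 1) k φ
  | _, _, _, .delta0 m k h => .delta0 (m + 1) k h
  | _, _, _, .ofPi m k h => .ofPi (m + 1) k h.succ
  | _, _, _, .ex m k h => .ex (m + 1) k h.succ

theorem PiFm.succ : ∀ {m k : ℕ} {φ : lang.BoundedFormula α k}, PiFm m k φ → PiFm (m + 1) k φ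
  | _, _, _, .delta0 m k h => .delta0 (m + 1) k h
  | _, _, _, .ofSigma m k h => .ofSigma (m + 1) k h.succ
  | _, _, _, .all m k h => .all (m + 1) k h.succ

end

theorem ISig.of_succ {M : Type} [lang.Structure M] {m : ℕ} (hI : ISig (m + 1) M) : ISig m M := by
  rintro A ⟨p, φ, w, hφ, e⟩
  exact hI A ⟨p, φ, w, hφ.succ, e⟩

theorem ISig.mono {M : Type} [lang.Structure M] {m n : ℕ} (hmn : m ≤ n) (hI : ISig n M) :
    ISig m M := by
  induction hmn with
  | refl => exact hI
  | step _ ih => exact ih hI.of_succ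

end Monotonicity

/-! ### Definable relations with parameters -/

section TermFunctions

variable {M : Type} [lang.Structure M]

/-- `f` is a polynomial function: the interpretation of a term with parameters from `M`. -/
def IsTermFun {k : ℕ} (f : (Fin k → M) → M) : Prop :=
  ∃ t : lang.Term (M ⊕ Fin k), ∀ v, f v = t.realize (Sum.elim id v)

namespace IsTermFun

variable {j k : ℕ}

theorem const (a : M) : IsTermFun fun _ : Fin k → M => a :=
  ⟨.var (.inl a), fun _ => rfl⟩

theorem var (i : Fin k) : IsTermFun fun v : Fin k → M => v i :=
  ⟨.var (.inr i), fun _ => rfl⟩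

theorem add {f g : (Fin k → M) → M} (hf : IsTermFun f) (hg : IsTermFun g) :
    IsTermFun fun v => f v + g v := by
  obtain ⟨t, ht⟩ := hf
  obtain ⟨s, hs⟩ := hg
  refine ⟨Functions.apply₂ (L := lang) Func.add t s, fun v => ?_⟩
  simp only [ht, hs]
  exact Term.realize_functions_apply₂.symm

theorem mul {f g : (Fin k → M) → M} (hf : IsTermFun f) (hg : IsTermFun g) :
    IsTermFun fun v => f v * g v := by
  obtain ⟨t, ht⟩ := hf
  obtain ⟨s, hs⟩ := hg
  refine ⟨Functions.apply₂ (L := lang) Func.mul t s, fun v => ?_⟩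
  simp only [ht, hs]
  exact Term.realize_functions_apply₂.symm

theorem comp {f : (Fin k → M) → M} {g : (Fin j → M) → Fin k → M} (hf : IsTermFun f)
    (hg : ∀ i, IsTermFun fun v => g v i) : IsTermFun fun v => f (g v) := by
  obtain ⟨t, ht⟩ := hf
  choose s hs using hg
  refine ⟨t.subst (Sum.elim (fun a => .var (.inl a)) s), fun v => ?_⟩
  simp only [ht, realize_subst_sumElim, show g v = _ from funext fun i => hs i v]
  rfl

theorem snoc {g : (Fin j → M) → Fin k → M} {f : (Fin j → M) → M}
    (hg : ∀ i, IsTermFun fun v => g v i) (hf : IsTermFun f) :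
    ∀ i, IsTermFun fun v => (Fin.snoc (g v) (f v) : Fin (k + 1) → M) i := by
  intro i
  induction i using Fin.lastCases with
  | last => simpa using hf
  | cast i => simpa using hg i

end IsTermFun

end TermFunctions

section SigmaRel

variable {M : Type} [lang.Structure M]

/-- `P` is defined, with parameters, by a Δ₀ formula preceded by `m` alternating unbounded
quantifiers of which the first is existential: the normal form of Σ_m relations. Each level is
the existential projection of the negation of a relation of the previous level, and the projected
coordinate is the last one. -/
def SigmaRel : ℕ → ∀ {k : ℕ}, ((Fin k → M) → Prop) → Prop
  | 0, k, P => ∃ φ : lang.BoundedFormula M k, IsDelta0 k φ ∧ ∀ v, P v ↔ φ.Realize id v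
  | m + 1, k, P => ∃ S : (Fin k → M) → M → Prop,
      SigmaRel m (fun w : Fin (k + 1) → M => ¬S (Fin.init w) (w (Fin.last k))) ∧
        ∀ v, P v ↔ ∃ y, S v y

/-- `P` has a Π_m normal form, that is, its complement has a Σ_m normal form. -/
abbrev PiRel (m : ℕ) {k : ℕ} (P : (Fin k → M) → Prop) : Prop := SigmaRel m fun v => ¬P v

variable {m j k : ℕ} {P Q : (Fin k → M) → Prop} {f g : (Fin k → M) → M}

theorem SigmaRel.congr (h : SigmaRel m P) (e : ∀ v, P v ↔ Q v) : SigmaRel m Q :=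
  (funext fun v => propext (e v) : P = Q) ▸ h

theorem SigmaRel.comp {m j k : ℕ} {P : (Fin k → M) → Prop} {g : (Fin j → M) → Fin k → M}
    (h : SigmaRel m P) (hg : ∀ i, IsTermFun fun v => g v i) : SigmaRel m fun v => P (g v) := by
  induction m generalizing j k with
  | zero =>
    obtain ⟨φ, hφ, e⟩ := h
    choose t ht using hg
    obtain ⟨ψ, hψ, e'⟩ := hφ.exists_subst M
      (Sum.elim (fun a => .var (.inl a)) t : M ⊕ Fin k → lang.Term (M ⊕ Fin j))
    refine ⟨ψ, hψ, fun v => ?_⟩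
    simp only [e, e' id v, show g v = _ from funext fun i => ht i v]
    rfl
  | succ m ih =>
    obtain ⟨S, hS, e⟩ := h
    refine ⟨fun v y => S (g v) y, ?_, fun v => e (g v)⟩
    have hinit : ∀ i, IsTermFun fun w : Fin (j + 1) → M => g (Fin.init w) i :=
      fun i => (hg i).comp fun l => .var l.castSucc
    simpa only [Fin.init_snoc, Fin.snoc_last] using ih hS (IsTermFun.snoc hinit (.var (Fin.last j)))

theorem PiRel.comp_snoc {S : (Fin k → M) → M → Prop} {g : (Fin j → M) → Fin k → M}
    {f : (Fin j → M) → M} (h : PiRel m fun w : Fin (k + 1) → M => S (Fin.init w) (w (Fin.last k)))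
    (hg : ∀ i, IsTermFun fun v => g v i) (hf : IsTermFun f) : PiRel m fun v => S (g v) (f v) := by
  simpa only [Fin.init_snoc, Fin.snoc_last] using SigmaRel.comp h (.snoc hg hf)

theorem SigmaRel.not_zero (h : SigmaRel 0 P) : SigmaRel 0 fun v => ¬P v := by
  obtain ⟨φ, hφ, e⟩ := h
  exact ⟨_, .imp k hφ (.falsum k), fun v => not_congr (e v)⟩

theorem SigmaRel.imp_zero (h : SigmaRel 0 P) (h' : SigmaRel 0 Q) :
    SigmaRel 0 fun v => P v → Q v := by
  obtain ⟨φ, hφ, e⟩ := h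
  obtain ⟨ψ, hψ, e'⟩ := h'
  exact ⟨_, .imp k hφ hψ, fun v => imp_congr (e v) (e' v)⟩

theorem SigmaRel.ball_zero {P : (Fin k → M) → M → Prop}
    (h : SigmaRel 0 fun w : Fin (k + 1) → M => P (Fin.init w) (w (Fin.last k)))
    (hf : IsTermFun f) : SigmaRel 0 fun v => ∀ i < f v, P v i := by
  obtain ⟨t, ht⟩ := hf
  obtain ⟨φ, hφ, e⟩ := h
  refine ⟨_, .bdAll k t hφ, fun v => ?_⟩
  simp only [BoundedFormula.Realize, realize_ltFm, realize_liftAt_snoc, ht, ← e,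
    Term.realize_var, Sum.elim_inr, Fin.snoc_last, Fin.init_snoc]

theorem SigmaRel.exists_of_piRel {S : (Fin k → M) → M → Prop}
    (h : PiRel m fun w : Fin (k + 1) → M => S (Fin.init w) (w (Fin.last k))) :
    SigmaRel (m + 1) fun v => ∃ y, S v y :=
  ⟨S, h, fun _ => Iff.rfl⟩

theorem SigmaRel.of_piRel (h : PiRel m P) : SigmaRel (m + 1) P :=
  ⟨fun v _ => P v, SigmaRel.comp h fun i => .var i.castSucc,
    fun _ => (exists_const_iff.trans (and_iff_right ⟨0⟩)).symm⟩

theorem SigmaRel.succ {m k : ℕ} {P : (Fin k → M) → Prop} (h : SigmaRel m P) :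
    SigmaRel (m + 1) P := by
  induction m generalizing k with
  | zero => exact .of_piRel h.not_zero
  | succ m ih =>
    obtain ⟨S, hS, e⟩ := h
    exact ⟨S, ih hS, e⟩

theorem SigmaRel.of_zero (h : SigmaRel 0 P) : SigmaRel m P := by
  induction m with
  | zero => exact h
  | succ m ih => exact ih.succ

theorem SigmaRel.eq (hf : IsTermFun f) (hg : IsTermFun g) : SigmaRel m fun v => f v = g v := by
  obtain ⟨t, ht⟩ := hf
  obtain ⟨s, hs⟩ := hg
  refine .of_zero ⟨_, .equal k t s, fun v => ?_⟩
  simp only [BoundedFormula.Realize, ht, hs]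

theorem SigmaRel.lt (hf : IsTermFun f) (hg : IsTermFun g) : SigmaRel m fun v => f v < g v := by
  obtain ⟨t, ht⟩ := hf
  obtain ⟨s, hs⟩ := hg
  refine .of_zero ⟨ltFm t s, .rel k 2 Rel.lt ![t, s], fun v => ?_⟩
  simp only [realize_ltFm, ht, hs]

end SigmaRel

section Definability

variable {M : Type} [lang.Structure M] {m k : ℕ} {P : (Fin k → M) → Prop}

theorem SigmaRel.exists_sigmaFm_and_exists_piFm {m k : ℕ} {P : (Fin k → M) → Prop}
    (h : SigmaRel m P) :
    (∃ φ : lang.BoundedFormula M k, SigmaFm m k φ ∧ ∀ v, P v ↔ φ.Realize id v) ∧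
      ∃ ψ : lang.BoundedFormula M k, PiFm m k ψ ∧ ∀ v, ¬P v ↔ ψ.Realize id v := by
  induction m generalizing k with
  | zero =>
    obtain ⟨ψ, hψ, e'⟩ := h.not_zero
    obtain ⟨φ, hφ, e⟩ := h
    exact ⟨⟨φ, .delta0 0 k hφ, e⟩, ⟨ψ, .delta0 0 k hψ, e'⟩⟩
  | succ m ih =>
    obtain ⟨S, hS, e⟩ := h
    obtain ⟨⟨φ, hφ, eφ⟩, ⟨ψ, hψ, eψ⟩⟩ := ih hS
    refine ⟨⟨_, .ex m k (.ofPi m _ hψ), fun v => ?_⟩, ⟨_, .all m k (.ofSigma m _ hφ), fun v => ?_⟩⟩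
    · simp only [BoundedFormula.realize_ex, ← eψ, e, not_not, Fin.init_snoc, Fin.snoc_last]
    · simp only [BoundedFormula.realize_all, ← eφ, e, not_exists, Fin.init_snoc, Fin.snoc_last]

theorem realize_congr_of_eqOn_freeVarFinset [DecidableEq M] {φ : lang.BoundedFormula M k}
    {v v' : M → M} {xs : Fin k → M} (h : ∀ a ∈ φ.freeVarFinset, v a = v' a) :
    φ.Realize v xs ↔ φ.Realize v' xs :=
  (BoundedFormula.realize_restrictFreeVar (f := Subtype.val) v fun _ => rfl).symm.trans
    (BoundedFormula.realize_restrictFreeVar v' fun a => h a a.2)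

theorem SigmaRel.isSigmaDef (h : SigmaRel m P) : IsSigmaDef m M P := by
  classical
  obtain ⟨⟨φ, hφ, e⟩, -⟩ := h.exists_sigmaFm_and_exists_piFm
  -- Inserting `0` makes the parameter list nonempty, as `Function.invFun` requires.
  obtain ⟨p, w, hw⟩ := (insert 0 φ.freeVarFinset).finite_toSet.fin_embedding
  have mem_range : ∀ a ∈ insert 0 φ.freeVarFinset, ∃ i, w i = a := fun a ha =>
    (Set.ext_iff.1 hw a).2 ha
  have : Nonempty (Fin p) := ⟨(mem_range 0 (Finset.mem_insert_self _ _)).choose⟩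
  obtain ⟨ψ, hψ, e'⟩ := hφ.exists_subst M
    (Sum.elim (fun a => .var (.inl (.inr (Function.invFun w a)))) fun i => .var (.inl (.inl i)) :
      M ⊕ Fin k → lang.Term ((Fin k ⊕ Fin p) ⊕ Fin 0))
  refine ⟨p, ψ, w, hψ, fun v => ?_⟩
  rw [e, e']
  refine realize_congr_of_eqOn_freeVarFinset fun a ha => ?_
  exact (Function.invFun_eq (mem_range a (Finset.mem_insert_of_mem ha))).symm

theorem SigmaRel.induction {P : M → Prop} (hP : SigmaRel m fun v : Fin 1 → M => P (v 0))
    (hI : ISig m M) (zero : P 0) (succ : ∀ x, P x → P (x + 1))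
    (x : M) : P x :=
  hI {x | P x} hP.isSigmaDef zero succ x

end Definability

/-! ### Closure properties of the hierarchy -/

/-- The Σ_m relations of `M` are closed under the positive connectives and bounded quantifiers.
The quantified variable is the last coordinate of the matrix. -/
structure SigmaClosed (M : Type) [lang.Structure M] (m : ℕ) : Prop where
  or : ∀ {k : ℕ} {P Q : (Fin k → M) → Prop},
    SigmaRel m P → SigmaRel m Q → SigmaRel m fun v => P v ∨ Q v
  and : ∀ {k : ℕ} {P Q : (Fin k → M) → Prop},
    SigmaRel m P → SigmaRel m Q → SigmaRel m fun v => P v ∧ Q v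
  bex : ∀ {k : ℕ} {P : (Fin k → M) → M → Prop} {f : (Fin k → M) → M},
    SigmaRel m (fun w : Fin (k + 1) → M => P (Fin.init w) (w (Fin.last k))) → IsTermFun f →
      SigmaRel m fun v => ∃ i < f v, P v i
  ball : ∀ {k : ℕ} {P : (Fin k → M) → M → Prop} {f : (Fin k → M) → M},
    SigmaRel m (fun w : Fin (k + 1) → M => P (Fin.init w) (w (Fin.last k))) → IsTermFun f →
      SigmaRel m fun v => ∀ i < f v, P v i

namespace SigmaClosed

variable {M : Type} [lang.Structure M] {m k : ℕ}

theorem pi_bex (c : SigmaClosed M m) {P : (Fin k → M) → M → Prop} {f : (Fin k → M) → M}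
    (h : PiRel m fun w : Fin (k + 1) → M => P (Fin.init w) (w (Fin.last k))) (hf : IsTermFun f) :
    PiRel m fun v => ∃ i < f v, P v i :=
  (c.ball (P := fun v i => ¬P v i) h hf).congr fun v => by push Not; rfl

theorem pi_ball (c : SigmaClosed M m) {P : (Fin k → M) → M → Prop} {f : (Fin k → M) → M}
    (h : PiRel m fun w : Fin (k + 1) → M => P (Fin.init w) (w (Fin.last k))) (hf : IsTermFun f) :
    PiRel m fun v => ∀ i < f v, P v i :=
  (c.bex (P := fun v i => ¬P v i) h hf).congr fun v => by push Not; rfl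

theorem zero : SigmaClosed M 0 where
  or h h' := (h.not_zero.imp_zero h').congr fun v => by tauto
  and h h' := (h.imp_zero h'.not_zero).not_zero.congr fun v => by tauto
  bex {_ P _} h hf :=
    (SigmaRel.ball_zero (P := fun v i => ¬P v i) h.not_zero hf).not_zero.congr fun v => by
      push Not; rfl
  ball h hf := h.ball_zero hf

theorem sigmaRel_ex (hPA : PAm M) (c : SigmaClosed M m) {P : (Fin k → M) → M → Prop}
    (h : SigmaRel (m + 1) fun w : Fin (k + 1) → M => P (Fin.init w) (w (Fin.last k))) :
    SigmaRel (m + 1) fun v => ∃ y, P v y := by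
  obtain ⟨S, hS, e⟩ := h
  have eP : ∀ v y, P v y ↔ ∃ z, S (Fin.snoc v y) z := fun v y => by
    simpa only [Fin.init_snoc, Fin.snoc_last] using e (Fin.snoc v y)
  have hB : SigmaRel (m + 1) fun v => ∃ b, ∃ y < b, ∃ z < b, S (Fin.snoc v y) z :=
    .exists_of_piRel <| c.pi_bex (c.pi_bex
      (PiRel.comp_snoc hS (.snoc (fun _ => .var _) (.var _)) (.var _)) (.var _)) (.var _)
  refine hB.congr fun v => ?_
  simp only [eP]
  constructor
  · rintro ⟨b, y, -, z, -, hs⟩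
    exact ⟨y, z, hs⟩
  · rintro ⟨y, z, hs⟩
    obtain ⟨b, hy, hz⟩ := hPA.exists_gt_gt y z
    exact ⟨b, y, hy, z, hz, hs⟩

theorem or_succ (c : SigmaClosed M m) {P Q : (Fin k → M) → Prop} (hP : SigmaRel (m + 1) P)
    (hQ : SigmaRel (m + 1) Q) : SigmaRel (m + 1) fun v => P v ∨ Q v := by
  obtain ⟨S, hS, e⟩ := hP
  obtain ⟨T, hT, e'⟩ := hQ
  refine ⟨fun v y => S v y ∨ T v y, (c.and hS hT).congr fun v => not_or.symm, fun v => ?_⟩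
  simp only [e, e', exists_or]

theorem and_succ (hPA : PAm M) (c : SigmaClosed M m) {P Q : (Fin k → M) → Prop}
    (hP : SigmaRel (m + 1) P) (hQ : SigmaRel (m + 1) Q) :
    SigmaRel (m + 1) fun v => P v ∧ Q v := by
  obtain ⟨S, hS, e⟩ := hP
  obtain ⟨T, hT, e'⟩ := hQ
  have bounded : ∀ {S : (Fin k → M) → M → Prop},
      PiRel m (fun w : Fin (k + 1) → M => S (Fin.init w) (w (Fin.last k))) →
        PiRel m fun w : Fin (k + 1) → M => ∃ y < w (Fin.last k), S (Fin.init w) y :=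
    fun hS => c.pi_bex (PiRel.comp_snoc hS (fun _ => .var _) (.var _)) (.var _)
  refine ⟨fun v b => (∃ y < b, S v y) ∧ ∃ z < b, T v z,
    (c.or (bounded hS) (bounded hT)).congr fun v => not_and_or.symm, fun v => ?_⟩
  simp only [e, e']
  constructor
  · rintro ⟨⟨y, hs⟩, ⟨z, ht⟩⟩
    obtain ⟨b, hy, hz⟩ := hPA.exists_gt_gt y z
    exact ⟨b, ⟨y, hy, hs⟩, ⟨z, hz, ht⟩⟩
  · rintro ⟨b, ⟨y, -, hs⟩, ⟨z, -, ht⟩⟩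
    exact ⟨⟨y, hs⟩, ⟨z, ht⟩⟩

theorem bex_succ (c : SigmaClosed M m) {P : (Fin k → M) → M → Prop} {f : (Fin k → M) → M}
    (h : SigmaRel (m + 1) fun w : Fin (k + 1) → M => P (Fin.init w) (w (Fin.last k)))
    (hf : IsTermFun f) : SigmaRel (m + 1) fun v => ∃ i < f v, P v i := by
  obtain ⟨S, hS, e⟩ := h
  have eP : ∀ v i, P v i ↔ ∃ y, S (Fin.snoc v i) y := fun v i => by
    simpa only [Fin.init_snoc, Fin.snoc_last] using e (Fin.snoc v i)
  have hB : SigmaRel (m + 1) fun v => ∃ y, ∃ i < f v, S (Fin.snoc v i) y :=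
    .exists_of_piRel <| c.pi_bex
      (PiRel.comp_snoc hS (.snoc (fun _ => .var _) (.var _)) (.var _))
      (hf.comp fun _ => .var _)
  refine hB.congr fun v => ?_
  simp only [eP]
  exact ⟨fun ⟨y, i, hi, hs⟩ => ⟨i, hi, y, hs⟩, fun ⟨i, hi, y, hs⟩ => ⟨y, i, hi, hs⟩⟩

theorem collection (hPA : PAm M) (c : SigmaClosed M m) (hI : ISig (m + 1) M) {R : M → M → Prop}
    (hR : PiRel m fun v : Fin 2 → M => R (v 0) (v 1)) {a : M} (h : ∀ i < a, ∃ y, R i y) :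
    ∃ b, ∀ i < a, ∃ y < b, R i y := by
  have hdef : SigmaRel (m + 1) fun v : Fin 1 → M => ∃ b, ∀ i < v 0, i < a → ∃ y < b, R i y := by
    have hmatrix : PiRel m fun w : Fin 3 → M => w 2 < a → ∃ y < w 1, R (w 2) y :=
      (c.and (.lt (.var 2) (.const a)) (c.pi_bex
        (hR.comp (g := fun u : Fin 4 → M => ![u 2, u 3])
          (Fin.forall_fin_two.2 ⟨.var 2, .var 3⟩)) (.var 1))).congr fun w => Classical.not_imp.symm
    exact .exists_of_piRel (c.pi_ball hmatrix (.var _))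
  have step : ∀ x, (∃ b, ∀ i < x, i < a → ∃ y < b, R i y) →
      ∃ b, ∀ i < x + 1, i < a → ∃ y < b, R i y := by
    rintro x ⟨b, hb⟩
    by_cases hx : x < a
    · obtain ⟨y, hy⟩ := h x hx
      obtain ⟨b', hbb', hyb'⟩ := hPA.exists_gt_gt b y
      refine ⟨b', fun i hi hia => ?_⟩
      rcases hPA.lt_add_one_iff.1 hi with hix | rfl
      · obtain ⟨z, hz, hiz⟩ := hb i hix hia
        exact ⟨z, hPA.lt_trans _ _ _ hz hbb', hiz⟩
      · exact ⟨y, hyb', hy⟩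
    · refine ⟨b, fun i hi hia => ?_⟩
      rcases hPA.lt_add_one_iff.1 hi with hix | rfl
      · exact hb i hix hia
      · exact absurd hia hx
  obtain ⟨b, hb⟩ := hdef.induction hI ⟨0, fun i hi => absurd hi (hPA.not_lt_zero i)⟩ step a
  exact ⟨b, fun i hi => hb i hi hi⟩

theorem ball_succ (hPA : PAm M) (c : SigmaClosed M m) (hI : ISig (m + 1) M)
    {P : (Fin k → M) → M → Prop} {f : (Fin k → M) → M}
    (h : SigmaRel (m + 1) fun w : Fin (k + 1) → M => P (Fin.init w) (w (Fin.last k)))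
    (hf : IsTermFun f) : SigmaRel (m + 1) fun v => ∀ i < f v, P v i := by
  obtain ⟨S, hS, e⟩ := h
  have eP : ∀ v i, P v i ↔ ∃ y, S (Fin.snoc v i) y := fun v i => by
    simpa only [Fin.init_snoc, Fin.snoc_last] using e (Fin.snoc v i)
  have hB : SigmaRel (m + 1) fun v => ∃ b, ∀ i < f v, ∃ y < b, S (Fin.snoc v i) y :=
    .exists_of_piRel <| c.pi_ball (c.pi_bex
      (PiRel.comp_snoc hS (.snoc (fun _ => .var _) (.var _)) (.var _)) (.var _))
      (hf.comp fun _ => .var _)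
  refine hB.congr fun v => ?_
  simp only [eP]
  constructor
  · rintro ⟨b, hb⟩ i hi
    exact (hb i hi).imp fun y hy => hy.2
  · exact c.collection hPA hI (R := fun i y => S (Fin.snoc v i) y)
      (PiRel.comp_snoc hS (.snoc (fun _ => .const _) (.var 0)) (.var 1))

end SigmaClosed

theorem ISig.sigmaClosed {M : Type} [lang.Structure M] (hPA : PAm M) :
    ∀ {m : ℕ}, ISig m M → SigmaClosed M m
  | 0, _ => .zero
  | _ + 1, hI =>
    have c := hI.of_succ.sigmaClosed hPA
    { or := c.or_succ
      and := c.and_succ hPA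
      bex := c.bex_succ
      ball := c.ball_succ hPA hI }

section SyntacticHierarchy

variable {M : Type} [lang.Structure M]

theorem IsDelta0.sigmaRel {m k : ℕ} {φ : lang.BoundedFormula M k} (h : IsDelta0 k φ) :
    SigmaRel m fun v => φ.Realize id v :=
  .of_zero ⟨φ, h, fun _ => Iff.rfl⟩

mutual

theorem SigmaFm.sigmaRel (hPA : PAm M) : ∀ {m k : ℕ} {φ : lang.BoundedFormula M k},
    SigmaFm m k φ → (∀ i < m, SigmaClosed M i) → SigmaRel m fun v => φ.Realize id v
  | _, _, _, .delta0 _ _ h, _ => h.sigmaRel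
  | _, _, _, .ofPi m _ h, c => .of_piRel (h.piRel hPA fun i hi => c i (Nat.lt_succ_of_lt hi))
  | _, _, _, @SigmaFm.ex _ m k φ h, c => by
    have hφ : SigmaRel (m + 1) fun w : Fin (k + 1) → M =>
        φ.Realize id (Fin.snoc (Fin.init w) (w (Fin.last k))) := by
      simpa only [Fin.snoc_init_self] using h.sigmaRel hPA c
    simpa only [BoundedFormula.realize_ex] using
      (c m m.lt_succ_self).sigmaRel_ex hPA (P := fun v y => φ.Realize id (Fin.snoc v y)) hφ

theorem PiFm.piRel (hPA : PAm M) : ∀ {m k : ℕ} {φ : lang.BoundedFormula M k},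
    PiFm m k φ → (∀ i < m, SigmaClosed M i) → PiRel m fun v => φ.Realize id v
  | _, k, _, .delta0 _ _ h, _ => (IsDelta0.imp k h (.falsum k)).sigmaRel
  | _, _, _, .ofSigma m _ h, c => .of_piRel <|
    (h.sigmaRel hPA fun i hi => c i (Nat.lt_succ_of_lt hi)).congr fun _ => not_not.symm
  | _, _, _, @PiFm.all _ m k φ h, c => by
    have hφ : PiRel (m + 1) fun w : Fin (k + 1) → M =>
        φ.Realize id (Fin.snoc (Fin.init w) (w (Fin.last k))) := by
      simpa only [Fin.snoc_init_self] using h.piRel hPA c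
    simpa only [PiRel, BoundedFormula.realize_all, not_forall] using
      (c m m.lt_succ_self).sigmaRel_ex hPA (P := fun v y => ¬φ.Realize id (Fin.snoc v y)) hφ

end

theorem IsSigmaDef.sigmaRel {m k : ℕ} {P : (Fin k → M) → Prop} (h : IsSigmaDef m M P)
    (hPA : PAm M) (c : ∀ i < m, SigmaClosed M i) : SigmaRel m P := by
  obtain ⟨p, φ, w, hφ, e⟩ := h
  obtain ⟨ψ, hψ, e'⟩ := hφ.exists_subst M
    (Sum.elim (Sum.elim (fun i => .var (.inr i)) fun i => .var (.inl (w i))) finZeroElim :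
      (Fin k ⊕ Fin p) ⊕ Fin 0 → lang.Term (M ⊕ Fin k))
  refine (hψ.sigmaRel hPA c).congr fun v => ?_
  rw [e, e']
  convert Iff.rfl using 2
  funext a
  rcases a with i | i <;> rfl

end SyntacticHierarchy

/-! ### Least elements and uniformization -/

section Uniformization

variable {M : Type} [lang.Structure M] {m k : ℕ}

theorem PiRel.exists_isLeast (hPA : PAm M) (hI : ISig m M) {s : Set M}
    (hs : PiRel m fun v : Fin 1 → M => v 0 ∈ s) (hne : s.Nonempty) : ∃ b, IsLeast s b := by
  obtain ⟨a, ha⟩ := hne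
  by_contra! hmin
  have not_mem : ∀ x, ∀ i < x, i ∉ s := by
    have hdef : SigmaRel m fun v : Fin 1 → M => ∀ i < v 0, i ∉ s :=
      (hI.sigmaClosed hPA).ball
        (hs.comp (g := fun w : Fin 2 → M => fun _ => w 1) fun _ => .var 1) (.var 0)
    refine hdef.induction hI (fun i hi => absurd hi (hPA.not_lt_zero i)) fun x hx i hi => ?_
    rcases hPA.lt_add_one_iff.1 hi with hix | rfl
    · exact hx i hix
    · exact fun his => hmin i (hPA.isLeast_iff.2 ⟨his, hx⟩)
  exact not_mem (a + 1) a (hPA.lt_add_one_iff.2 (.inr rfl)) ha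

theorem SigmaClosed.sigmaRel_isLeast (hPA : PAm M) (c : SigmaClosed M m)
    {T : (Fin k → M) → M → Prop} {f : (Fin k → M) → M}
    (hT : PiRel m fun w : Fin (k + 1) → M => T (Fin.init w) (w (Fin.last k)))
    (hf : IsTermFun f) : SigmaRel (m + 1) fun v => IsLeast {b | T v b} (f v) := by
  simp only [hPA.isLeast_iff]
  exact c.and_succ hPA (.of_piRel (PiRel.comp_snoc hT (fun _ => .var _) hf)) (c.ball hT hf).succ

/-- The canonical choice of a `z` with `∃ w, S z w`: take the least strict common bound `b` of a
pair `(z, w)` in `S`, then the least `z` having a witness below `b`. Minimizing `z` directly would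
require the least number principle for the existentially quantified relation. -/
def LeastWitnessed (S : M → M → Prop) (z : M) : Prop :=
  ∃ b, IsLeast {b | ∃ z < b, ∃ w < b, S z w} b ∧ IsLeast {z | ∃ w < b, S z w} z

theorem LeastWitnessed.exists_witness {S : M → M → Prop} {z : M} (h : LeastWitnessed S z) :
    ∃ w, S z w := by
  obtain ⟨b, -, ⟨w, -, hw⟩, -⟩ := h
  exact ⟨w, hw⟩

theorem LeastWitnessed.unique (hPA : PAm M) {S : M → M → Prop} {z z' : M}
    (h : LeastWitnessed S z) (h' : LeastWitnessed S z') : z = z' := by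
  obtain ⟨b, hb, hz⟩ := h
  obtain ⟨b', hb', hz'⟩ := h'
  obtain rfl := hPA.isLeast_unique hb hb'
  exact hPA.isLeast_unique hz hz'

theorem exists_leastWitnessed (hPA : PAm M) (hI : ISig m M) {S : M → M → Prop}
    (hS : PiRel m fun v : Fin 2 → M => S (v 0) (v 1)) {z w : M} (h : S z w) :
    ∃ z, LeastWitnessed S z := by
  have c := hI.sigmaClosed hPA
  have hW : PiRel m fun v : Fin 2 → M => ∃ w < v 0, S (v 1) w :=
    c.pi_bex (hS.comp (g := fun u : Fin 3 → M => ![u 1, u 2])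
      (Fin.forall_fin_two.2 ⟨.var 1, .var 2⟩)) (.var 0)
  have hB : PiRel m fun v : Fin 1 → M => ∃ z < v 0, ∃ w < v 0, S z w :=
    c.pi_bex (hW.comp (g := fun u : Fin 2 → M => u) fun _ => .var _) (.var 0)
  obtain ⟨b, hzb, hwb⟩ := hPA.exists_gt_gt z w
  obtain ⟨b, hb⟩ := PiRel.exists_isLeast hPA hI (s := {b | ∃ z < b, ∃ w < b, S z w}) hB
    ⟨b, z, hzb, w, hwb, h⟩
  obtain ⟨z, -, hz⟩ := hb.1
  obtain ⟨z, hz⟩ := PiRel.exists_isLeast hPA hI (s := {z | ∃ w < b, S z w})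
    (hW.comp (g := fun u : Fin 1 → M => ![b, u 0])
      (Fin.forall_fin_two.2 ⟨.const b, .var 0⟩)) ⟨z, hz⟩
  exact ⟨z, b, hb, hz⟩

theorem SigmaClosed.sigmaRel_leastWitnessed (hPA : PAm M) (c : SigmaClosed M m)
    {S : M → M → M → Prop} (hS : PiRel m fun v : Fin 3 → M => S (v 0) (v 1) (v 2)) :
    SigmaRel (m + 1) fun v : Fin 2 → M => LeastWitnessed (S (v 0)) (v 1) := by
  have hW : PiRel m fun v : Fin 3 → M => ∃ w < v 1, S (v 0) (v 2) w :=
    c.pi_bex (hS.comp (g := fun u : Fin 4 → M => ![u 0, u 2, u 3])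
      (Fin.forall_fin_succ.2 ⟨.var 0, Fin.forall_fin_two.2 ⟨.var 2, .var 3⟩⟩)) (.var 1)
  have hB : PiRel m fun v : Fin 2 → M => ∃ z < v 1, ∃ w < v 1, S (v 0) z w :=
    c.pi_bex (hW.comp (g := fun u : Fin 3 → M => u) fun _ => .var _) (.var 1)
  refine c.sigmaRel_ex hPA (c.and_succ hPA ?_ ?_)
  · exact c.sigmaRel_isLeast hPA (T := fun (v : Fin 3 → M) b => ∃ z < b, ∃ w < b, S (v 0) z w)
      (hB.comp (g := fun u : Fin 4 → M => ![u 0, u 3])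
        (Fin.forall_fin_two.2 ⟨.var 0, .var 3⟩)) (.var 2)
  · exact c.sigmaRel_isLeast hPA (T := fun (v : Fin 3 → M) z => ∃ w < v 2, S (v 0) z w)
      (hW.comp (g := fun u : Fin 4 → M => ![u 0, u 2, u 3])
        (Fin.forall_fin_succ.2 ⟨.var 0, Fin.forall_fin_two.2 ⟨.var 2, .var 3⟩⟩)) (.var 1)

theorem SigmaRel.uniformization (hPA : PAm M) (hI : ISig m M) {R : M → M → Prop}
    (hR : SigmaRel (m + 1) fun v : Fin 2 → M => R (v 0) (v 1)) :
    ∃ H : M → M → Prop, (SigmaRel (m + 1) fun v : Fin 2 → M => H (v 0) (v 1)) ∧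
      IsPartialFun H ∧ (∀ u z, H u z → R u z) ∧ ∀ u z, R u z → ∃ z', H u z' := by
  obtain ⟨S, hS, e⟩ := hR
  have eR : ∀ u z, R u z ↔ ∃ w, S ![u, z] w := fun u z => e ![u, z]
  have hS₃ : PiRel m fun v : Fin 3 → M => S ![v 0, v 1] (v 2) :=
    PiRel.comp_snoc hS (Fin.forall_fin_two.2 ⟨.var 0, .var 1⟩) (.var 2)
  refine ⟨fun u z => LeastWitnessed (fun z w => S ![u, z] w) z,
    (hI.sigmaClosed hPA).sigmaRel_leastWitnessed hPA (S := fun u z w => S ![u, z] w) hS₃,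
    fun u z z' h h' => h.unique hPA h',
    fun u z h => (eR u z).2 h.exists_witness, fun u z h => ?_⟩
  obtain ⟨w, hw⟩ := (eR u z).1 h
  exact exists_leastWitnessed hPA hI (S := fun z w => S ![u, z] w)
    (hS₃.comp (g := fun v : Fin 2 → M => ![u, v 0, v 1])
      (Fin.forall_fin_succ.2 ⟨.const u, Fin.forall_fin_two.2 ⟨.var 0, .var 1⟩⟩)) hw

end Uniformization

/-! ### Homogeneous injections -/

section Injections

variable {M : Type} [lang.Structure M] {m : ℕ} {x y : M}

theorem SigmaRel.exists_sigmaInjRel (hPA : PAm M) (hI : ISig m M) {F : M → M → Prop}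
    (hF : SigmaRel (m + 1) fun v : Fin 2 → M => F (v 0) (v 1))
    (total : ∀ u < y, ∃ v < x, F u v)
    (inj : ∀ u u' v, u < y → u' < y → F u v → F u' v → u = u') :
    ∃ H, SigmaInjRel M (m + 1) H y x ∧ ∀ u v, H u v → F u v := by
  have hR : SigmaRel (m + 1) fun v : Fin 2 → M => v 1 < x ∧ F (v 0) (v 1) :=
    (hI.sigmaClosed hPA).and_succ hPA (.lt (.var 1) (.const x)) hF
  obtain ⟨H, hH, unique, sub, dom⟩ := hR.uniformization hPA hI (R := fun u v => v < x ∧ F u v)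
  refine ⟨H, ⟨hH.isSigmaDef, fun u hu => ?_, fun u v v' _ => unique u v v',
    fun u u' v hu hu' h h' => inj u u' v hu hu' (sub u v h).2 (sub u' v h').2⟩,
    fun u v h => (sub u v h).2⟩
  obtain ⟨v, hv, huv⟩ := total u hu
  obtain ⟨v', h⟩ := dom u v ⟨hv, huv⟩
  exact ⟨v', (sub u v' h).1, h⟩

theorem sigmaInjRel_mul_add (hPA : PAm M) {u : M} (hu : u < y) :
    SigmaInjRel M m (fun a z => z = u * x + a) x (y * x) :=
  ⟨SigmaRel.isSigmaDef (.eq (.var 1) (.add (.const _) (.var 0))),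
    fun _ ha => ⟨_, hPA.mul_add_lt_mul hu ha, rfl⟩,
    fun _ _ _ _ h h' => h.trans h'.symm,
    fun _ _ _ _ _ h h' => hPA.add_left_cancel (h.symm.trans h')⟩

theorem sigmaRel_inBlock : SigmaRel m fun v : Fin 2 → M => InBlock x (v 0) (v 1) :=
  .of_zero <| SigmaClosed.zero.bex (P := fun (v : Fin 2 → M) i => v 1 = v 0 * x + i)
    (.eq (.var 1) (.add (.mul (.var 0) (.const x)) (.var 2))) (.const x)

end Injections

theorem statement_8_general (n : ℕ) (M : Type) [lang.Structure M] (hPA : PAm M) (hI : ISig n M) :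
    FairFRT1 M (n + 1) ((1 : M) + 1) := by
  intro x
  refine ⟨x * x, fun C ⟨hC, total, _⟩ => ?_⟩
  by_cases hmono : ∃ u < x, ∀ v < x, C (u * x + v) 0
  · obtain ⟨u, hu, hC0⟩ := hmono
    exact ⟨_, sigmaInjRel_mul_add hPA hu, 0, fun a z ha hz => hz ▸ hC0 a ha⟩
  push Not at hmono
  have meets_one : ∀ u < x, ∃ z < x * x, InBlock x u z ∧ C z 1 := by
    intro u hu
    obtain ⟨v, hv, hC0⟩ := hmono u hu
    have hz := hPA.mul_add_lt_mul hu hv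
    obtain ⟨i, hi, hCi⟩ := total _ hz
    rcases hPA.eq_zero_or_eq_one_of_lt_two hi with rfl | rfl
    · exact absurd hCi hC0
    · exact ⟨_, hz, ⟨v, hv, rfl⟩, hCi⟩
  have hC1 : SigmaRel (n + 1) fun v : Fin 2 → M => InBlock x (v 0) (v 1) ∧ C (v 1) 1 :=
    (hI.sigmaClosed hPA).and_succ hPA sigmaRel_inBlock <|
      (hC.sigmaRel hPA fun i hi => (hI.mono (Nat.le_of_lt_succ hi)).sigmaClosed hPA).comp
        (g := fun v : Fin 2 → M => ![v 1, 1]) (Fin.forall_fin_two.2 ⟨.var 1, .const 1⟩)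
  obtain ⟨H, hH, sub⟩ := hC1.exists_sigmaInjRel hPA hI (F := fun u z => InBlock x u z ∧ C z 1)
    meets_one fun u u' z _ _ h h' => h.1.unique hPA h'.1
  exact ⟨H, hH, 1, fun u z _ h => (sub u z h).2⟩

/-- For every `n ≥ 1`, PA⁻ + IΣn proves fairFRT¹₂(Σ_{n+1}). -/
theorem statement_8 (n : ℕ) (hn : 1 ≤ n) (M : Type) [lang.Structure M]
    (hPA : PAm M) (hI : ISig n M) :
    FairFRT1 M (n + 1) ((1 : M) + 1) :=
  statement_8_general n M hPA hI

end ArithFC
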